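/- Let F1 and F2 be S4F standpoint structures over the same atoms A and standpoint names S with F1 ⊴ F2, and suppose F2 is an S5 standpoint structure. Then for every formula φ and every u ∈ S: if F2 ⊩ ¬□_u φ then F1 ⊩ ¬□_u φ. -/

import Mathlib

/-- Formulas of S4F standpoint logic over atoms `A` and standpoint names `S`. -/
inductive SForm (A S : Type) : Type
  | atom : A → SForm A S
  | neg  : SForm A S → SForm A S
  | and  : SForm A S → SForm A S → SForm A S
  | box  : S → SForm A S → SForm A S

/-- Expressions: formulas or sharpening statements `s ≼ u`. -/
inductive SExpr (A S : Type) : Type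
  | form  : SForm A S → SExpr A S
  | sharp : S → S → SExpr A S

/-- S4F standpoint structures over a carrier type `P` of precisifications. -/
structure SFFS (A S P : Type) (star : S) where
  Pi : Set P
  sig : S → Set P
  tau : S → Set P
  val : P → Set A
  nonempty_Pi : Pi.Nonempty
  sig_sub : ∀ s, sig s ⊆ Pi
  tau_sub : ∀ s, tau s ⊆ Pi
  star_union : sig star ∪ tau star = Pi
  sig_nonempty : ∀ s, (sig s).Nonempty
  sig_tau_disj : ∀ s u, sig s ∩ tau u = ∅

/-- Pointed satisfaction `F, π ⊩ φ` for formulas. -/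
def SFFS.sat {A S P : Type} {star : S} (F : SFFS A S P star) : SForm A S → P → Prop
  | SForm.atom p, π => p ∈ F.val π
  | SForm.neg φ, π => ¬ F.sat φ π
  | SForm.and φ ψ, π => F.sat φ π ∧ F.sat ψ π
  | SForm.box s φ, π =>
      (π ∈ F.sig star → ∀ π' ∈ F.sig s, F.sat φ π') ∧
      (π ∈ F.tau star → ∀ π' ∈ F.sig s ∪ F.tau s, F.sat φ π')

/-- Pointed satisfaction for expressions. -/
def SFFS.satE {A S P : Type} {star : S} (F : SFFS A S P star) (e : SExpr A S) (π : P) : Prop :=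
  match e with
  | SExpr.form φ => F.sat φ π
  | SExpr.sharp s u => F.sig s ⊆ F.sig u ∧ F.tau s ⊆ F.tau u

/-- Global satisfaction `F ⊩ φ` of a formula. -/
def SFFS.models {A S P : Type} {star : S} (F : SFFS A S P star) (φ : SForm A S) : Prop :=
  ∀ π ∈ F.Pi, F.sat φ π

/-- Global satisfaction of an expression. -/
def SFFS.modelsE {A S P : Type} {star : S} (F : SFFS A S P star) (e : SExpr A S) : Prop :=
  ∀ π ∈ F.Pi, F.satE e π

/-- `F` is a model of a theory (set of expressions) `T`. -/
def SFFS.isModel {A S P : Type} {star : S} (F : SFFS A S P star) (T : Set (SExpr A S)) : Prop :=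
  ∀ e ∈ T, F.modelsE e

/-- `F` is a model of a set of formulas `T`. -/
def SFFS.isModelF {A S P : Type} {star : S} (F : SFFS A S P star) (T : Set (SForm A S)) : Prop :=
  ∀ φ ∈ T, F.models φ

/-- S5 standpoint structures: all outer sets empty. -/
def SFFS.IsS5 {A S P : Type} {star : S} (F : SFFS A S P star) : Prop :=
  ∀ s, F.tau s = ∅

/-- Determination preorder `F1 ⊴_s F2`, per standpoint. -/
def prefS {A S P1 P2 : Type} {star : S} (F1 : SFFS A S P1 star) (F2 : SFFS A S P2 star)
    (s : S) : Prop :=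
  F2.val '' F2.sig s = F1.val '' F1.sig s ∧
  F2.val '' F2.tau s ⊆ F1.val '' (F1.sig s ∪ F1.tau s)

/-- Determination preorder `F1 ⊴ F2`. -/
def pref {A S P1 P2 : Type} {star : S} (F1 : SFFS A S P1 star) (F2 : SFFS A S P2 star) : Prop :=
  ∀ s, prefS F1 F2 s

/-- Entailment `T ⊨ e`: every model of `T` satisfies `e`. -/
def Entails {A S : Type} (star : S) (T : Set (SExpr A S)) (e : SExpr A S) : Prop :=
  ∀ (P : Type) (F : SFFS A S P star), F.isModel T → F.modelsE e

/-- Derivable sharpening `T ⊢ s ≼ u`. -/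
inductive Sharpens {A S : Type} (star : S) (T : Set (SExpr A S)) : S → S → Prop
  | of_mem {s u : S} : SExpr.sharp s u ∈ T → Sharpens star T s u
  | to_star (s : S) : Sharpens star T s star
  | refl (s : S) : Sharpens star T s s
  | trans {s t u : S} : SExpr.sharp s t ∈ T → Sharpens star T t u → Sharpens star T s u

/-- An S5 standpoint structure `F` is a minimal model of a theory `T`. -/
def isMinimalModel {A S P : Type} {star : S} (F : SFFS A S P star) (T : Set (SExpr A S)) : Prop :=
  F.IsS5 ∧ F.isModel T ∧
  ∀ (P' : Type) (F' : SFFS A S P' star), pref F' F → F'.isModel T → (pref F' F ∧ pref F F')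

theorem SFFS.sig_sub_star {A S P : Type} {star : S} (F : SFFS A S P star) (s : S) {x : P}
    (hx : x ∈ F.sig s) : x ∈ F.sig star ∧ x ∉ F.tau star := by
  have h2 : x ∉ F.tau star := fun ht => by
    have : x ∈ F.sig s ∩ F.tau star := ⟨hx, ht⟩
    rw [F.sig_tau_disj] at this
    exact this
  have h1 : x ∈ F.sig star ∪ F.tau star := by
    rw [F.star_union]
    exact F.sig_sub s hx
  exact ⟨h1.resolve_right h2, h2⟩

theorem sat_iff_of_pref {A S P1 P2 : Type} (star : S)
    (F1 : SFFS A S P1 star) (F2 : SFFS A S P2 star) (h : pref F1 F2) (φ : SForm A S) :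
    ∀ x ∈ F1.sig star, ∀ y ∈ F2.sig star, F1.val x = F2.val y →
      (F1.sat φ x ↔ F2.sat φ y) := by
  induction φ with
  | atom p => intro x _ y _ e; simp [SFFS.sat, e]
  | neg φ ih => intro x hx y hy e; simp only [SFFS.sat, ih x hx y hy e]
  | and φ ψ ih1 ih2 =>
    intro x hx y hy e; simp only [SFFS.sat, ih1 x hx y hy e, ih2 x hx y hy e]
  | box s φ ih =>
    intro x hx y hy e
    have nx := (F1.sig_sub_star star hx).2
    have ny := (F2.sig_sub_star star hy).2
    simp only [SFFS.sat, hx, hy, nx, ny, true_imp_iff, false_imp_iff, and_true]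
    constructor
    · intro H b hb
      have : F2.val b ∈ F1.val '' F1.sig s := (h s).1 ▸ ⟨b, hb, rfl⟩
      obtain ⟨a, ha, hab⟩ := this
      exact (ih a (F1.sig_sub_star s ha).1 b (F2.sig_sub_star s hb).1 hab).1 (H a ha)
    · intro H a ha
      have : F1.val a ∈ F2.val '' F2.sig s := (h s).1 ▸ ⟨a, ha, rfl⟩
      obtain ⟨b, hb, hab⟩ := this
      exact (ih a (F1.sig_sub_star s ha).1 b (F2.sig_sub_star s hb).1 hab.symm).2 (H b hb)

/-- If `F1 ⊴ F2` and `F2` is S5, then `F2 ⊩ ¬□_u φ` implies `F1 ⊩ ¬□_u φ`. -/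
theorem negbox_global_passing_of_pref {A S P1 P2 : Type} (star : S)
    (F1 : SFFS A S P1 star) (F2 : SFFS A S P2 star) (h : pref F1 F2) (hS5 : F2.IsS5)
    (φ : SForm A S) (u : S) :
    F2.models (SForm.neg (SForm.box u φ)) → F1.models (SForm.neg (SForm.box u φ)) := by
  intro H x hx hbox
  have hbs : ∀ a ∈ F1.sig u, F1.sat φ a := by
    rw [← F1.star_union] at hx
    rcases hx with hx | hx
    · exact hbox.1 hx
    · exact fun a ha => hbox.2 hx a (Or.inl ha)
  obtain ⟨y, hy⟩ := F2.sig_nonempty star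
  refine H y (F2.sig_sub star hy) ⟨fun _ b hb => ?_, fun ht => ?_⟩
  · have : F2.val b ∈ F1.val '' F1.sig u := (h u).1 ▸ ⟨b, hb, rfl⟩
    obtain ⟨a, ha, hab⟩ := this
    exact (sat_iff_of_pref star F1 F2 h φ a (F1.sig_sub_star u ha).1 b
      (F2.sig_sub_star u hb).1 hab).1 (hbs a ha)
  · exact absurd ht (F2.sig_sub_star star hy).2
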